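/- There exists a constant α > 0 such that for every integer d ≥ 2, every real number c ≥ 1, every natural number n with (n : ℝ) ≥ max(12·d², d·12^(2c)), every natural number l with (l : ℝ) ≤ c·n/(log(n/d)), and every randomized online coloring algorithm with lookahead l, (ι, μ, (A i)), on n-vertex graphs, there exists a chordal simple graph G on Fin n with chromatic number χ(G) = d such that the expected number of colors used on G, namely ∑' i, (μ i)·(number of colors used by A i on G), is at least (α/c)·d·log n, where log is the base-2 logarithm. -/

import Mathlib

/-!
The lower bound comes from a random chordal graph (Yao's principle). Put `m = ⌊d / 2⌋`. At every
moment there is a list of *active sets* of vertices, and in each of `k` rounds they are merged in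
pairs. For a pair `(W₁, W₂)` a coin decides between two outcomes: either `W₁ ∪ W₂` becomes active,
or a new clique `V` of size `m` arrives, completely joined to `W₂`, and `W₁ ∪ V` becomes active.
One coin serves all pairs of a round. After each arrival of cliques, `l` positions are left to
isolated vertices, so the colors on active sets are fixed before the next coin is visible.

If `X`, `Y`, `Z` are the color sets of `W₁`, `W₂`, `V`, then `Z` is disjoint from `Y` and `|Z| = m`,
so by submodularity `|X ∪ Z| + |X ∪ Y| ≥ |X| + |Y| + m`. The two outcomes thus give, on average, at
least `m / 2` colors more than the average of `|X|` and `|Y|`; after `k` rounds, starting from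
`2 ^ k` empty sets, the expected number of colors is at least `k m / 2` (`exists_hard_graphs`).

The set `W₂` is never used again, so each vertex is joined to at most one later clique. Its later
neighbours are the rest of its own clique and that clique: they form a clique with at most
`2 m - 1 < d` vertices. Hence the order of arrival is a perfect elimination order, and the graph is
chordal and `d`-colorable by greedy coloring backwards in time; a separate `d`-clique on the first
vertices makes the chromatic number exactly `d`. Taking `k = ⌊log (n / d) / (2 c)⌋`, the
construction needs at most `n` vertices (`exists_parameters`), and `log n ≤ 2 log (n / d)`.
-/

/-- The number of colors used by an online algorithm `A` on the graph `G`. -/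
def colorsUsed {n : ℕ} (A : Fin n → SimpleGraph (Fin n) → ℕ)
    (G : SimpleGraph (Fin n)) : ℕ :=
  (Finset.univ.image fun v => A v G).card

/-- `A` is a deterministic online coloring algorithm on `n`-vertex graphs:
its decision at time `t` depends only on the graph induced on the vertices `≤ t`,
and the produced coloring is always proper. -/
def IsOnlineAlg {n : ℕ} (A : Fin n → SimpleGraph (Fin n) → ℕ) : Prop :=
  (∀ (t : Fin n) (G G' : SimpleGraph (Fin n)),
      (∀ u v : Fin n, u ≤ t → v ≤ t → (G.Adj u v ↔ G'.Adj u v)) → A t G = A t G') ∧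
  ∀ (G : SimpleGraph (Fin n)) (u v : Fin n), G.Adj u v → A u G ≠ A v G

/-- A closed walk has a chord: an edge of the graph joining two vertices of the walk
that are not consecutive on it (i.e. the edge is not an edge of the walk). -/
def SimpleGraph.Walk.HasChord {V : Type*} {G : SimpleGraph V} {v : V}
    (p : G.Walk v v) : Prop :=
  ∃ x y, x ∈ p.support ∧ y ∈ p.support ∧ G.Adj x y ∧ s(x, y) ∉ p.edges

/-- A graph is chordal if every cycle of length at least 4 has a chord. -/
def SimpleGraph.IsChordal {V : Type*} (G : SimpleGraph V) : Prop :=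
  ∀ ⦃v : V⦄ (p : G.Walk v v), p.IsCycle → 4 ≤ p.length → p.HasChord


/-- `A` is a deterministic online coloring algorithm with lookahead `l` on
`n`-vertex graphs: its decision at time `t` depends only on the graph induced on
the vertices `≤ min (t + l) (n - 1)`, and the coloring is always proper. -/
def IsOnlineAlgLookahead {n : ℕ} (l : ℕ) (A : Fin n → SimpleGraph (Fin n) → ℕ) : Prop :=
  (∀ (t : Fin n) (G G' : SimpleGraph (Fin n)),
      (∀ u v : Fin n, (u : ℕ) ≤ min ((t : ℕ) + l) (n - 1) →
          (v : ℕ) ≤ min ((t : ℕ) + l) (n - 1) → (G.Adj u v ↔ G'.Adj u v)) →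
        A t G = A t G') ∧
  ∀ (G : SimpleGraph (Fin n)) (u v : Fin n), G.Adj u v → A u G ≠ A v G

open Finset

/-! ### Elimination orders -/

/-- The neighbours of `a` that arrive after `a`. -/
noncomputable def laterNbrs {n : ℕ} (G : SimpleGraph (Fin n)) (a : Fin n) : Finset (Fin n) := by
  classical exact univ.filter fun b => a < b ∧ G.Adj a b

theorem mem_laterNbrs {n : ℕ} {G : SimpleGraph (Fin n)} {a b : Fin n} :
    b ∈ laterNbrs G a ↔ a < b ∧ G.Adj a b := by
  classical
  simp [laterNbrs]

/-- The order of arrival is a perfect elimination order of `G`: the later neighbours of each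
vertex are pairwise adjacent. -/
def IsElimOrder {n : ℕ} (G : SimpleGraph (Fin n)) : Prop :=
  ∀ a b c : Fin n, a < b → a < c → b ≠ c → G.Adj a b → G.Adj a c → G.Adj b c

/-- The chord joins the two neighbours on the cycle of its earliest vertex. -/
theorem IsElimOrder.isChordal {n : ℕ} {G : SimpleGraph (Fin n)} (h : IsElimOrder G) :
    G.IsChordal := by
  classical
  intro v p hp hlen
  obtain ⟨a, ha, hmin⟩ := p.support.toFinset.exists_min_image id ⟨v, by simp⟩
  rw [List.mem_toFinset] at ha
  have hq : (p.rotate a ha).IsCycle := (SimpleGraph.Walk.isCycle_rotate ha).2 hp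
  have hql : 4 ≤ (p.rotate a ha).length := by simpa using hlen
  have hsup : ∀ x, x ∈ (p.rotate a ha).support → x ∈ p.support := fun x hx =>
    (SimpleGraph.Walk.mem_support_rotate_iff p a ha).1 hx
  have hedges : ∀ e, e ∈ p.edges → e ∈ (p.rotate a ha).edges := fun e he =>
    (p.rotate_edges a ha).mem_iff.2 he
  generalize p.rotate a ha = q at hq hql hsup hedges
  have hb : q.getVert 1 ∈ q.support := q.getVert_mem_support 1
  have hc : q.getVert (q.length - 1) ∈ q.support := q.getVert_mem_support _
  have hab : G.Adj a (q.getVert 1) := by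
    have := q.adj_getVert_succ (i := 0) (by omega)
    simpa using this
  have hac : G.Adj a (q.getVert (q.length - 1)) := by
    have := q.adj_getVert_succ (i := q.length - 1) (by omega)
    rw [Nat.sub_add_cancel (by omega), q.getVert_length] at this
    exact this.symm
  have hlt : ∀ x, x ∈ q.support → G.Adj a x → a < x := fun x hx hadj =>
    lt_of_le_of_ne (hmin x (by simpa using hsup x hx)) hadj.ne
  have inj := hq.getVert_injOn
  have hne : q.getVert 1 ≠ q.getVert (q.length - 1) := fun e => by
    have := inj (by simp; omega) (by simp; omega) e
    omega
  refine ⟨_, _, hsup _ hb, hsup _ hc,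
    h a _ _ (hlt _ hb hab) (hlt _ hc hac) hne hab hac, fun hmem => ?_⟩
  obtain ⟨i, hi, he⟩ := (SimpleGraph.Walk.mk_mem_edges_iff_exists q).1 (hedges _ hmem)
  rcases Nat.eq_zero_or_pos i with rfl | hpos
  · rw [SimpleGraph.Walk.getVert_zero] at he
    rcases Sym2.eq_iff.1 he with ⟨h1, -⟩ | ⟨h1, -⟩
    · exact hab.ne h1
    · exact hac.ne h1
  · rcases Sym2.eq_iff.1 he with ⟨h1, h2⟩ | ⟨h1, h2⟩
    · have := inj (by simp; omega) (by simp; omega) h1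
      have := inj (by simp; omega) (by simp; omega) h2
      omega
    · have := inj (by simp; omega) (by simp; omega) h1
      have := inj (by simp; omega) (by simp; omega) h2
      omega

/-- Greedy coloring, from the last vertex to the first. -/
theorem colorable_of_laterNbrs {n d : ℕ} {G : SimpleGraph (Fin n)}
    (h : ∀ a, (laterNbrs G a).card < d) : G.Colorable d := by
  suffices H : ∀ t, t ≤ n → ∃ f : Fin n → Fin d, ∀ u v : Fin n, n - t ≤ (u : ℕ) →
      n - t ≤ (v : ℕ) → G.Adj u v → f u ≠ f v by
    obtain ⟨f, hf⟩ := H n le_rfl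
    exact ⟨SimpleGraph.Coloring.mk f fun {u v} huv => hf u v (by omega) (by omega) huv⟩
  intro t
  induction t with
  | zero =>
    intro _
    rcases Nat.eq_zero_or_pos n with rfl | hn
    · exact ⟨fun u => u.elim0, fun u => u.elim0⟩
    · exact ⟨fun _ => ⟨0, Nat.zero_lt_of_lt (h ⟨0, hn⟩)⟩, fun u => by omega⟩
  | succ t ih =>
    intro ht
    obtain ⟨f, hf⟩ := ih (by omega)
    let a : Fin n := ⟨n - (t + 1), by omega⟩
    obtain ⟨x, hx⟩ : ∃ x, x ∉ (laterNbrs G a).image f := by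
      by_contra! hall
      have h1 : (univ : Finset (Fin d)) ⊆ (laterNbrs G a).image f := fun x _ => hall x
      have h2 := (card_le_card h1).trans card_image_le
      have h3 := h a
      rw [card_univ, Fintype.card_fin] at h2
      omega
    have hfree : ∀ v : Fin n, n - (t + 1) ≤ (v : ℕ) → G.Adj a v → x ≠ f v := by
      rintro v hv hadj rfl
      refine hx (mem_image_of_mem f (mem_laterNbrs.2 ⟨?_, hadj⟩))
      exact lt_of_le_of_ne hv hadj.ne
    refine ⟨Function.update f a x, fun u v hu hv huv => ?_⟩
    by_cases hua : u = a
    · subst hua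
      rw [Function.update_self, Function.update_of_ne huv.ne']
      exact hfree v hv huv
    · by_cases hva : v = a
      · subst hva
        rw [Function.update_self, Function.update_of_ne huv.ne]
        exact (hfree u hu huv.symm).symm
      · rw [Function.update_of_ne hua, Function.update_of_ne hva]
        have h1 : (u : ℕ) ≠ n - (t + 1) := fun e => hua (Fin.ext e)
        have h2 : (v : ℕ) ≠ n - (t + 1) := fun e => hva (Fin.ext e)
        exact hf u v (by omega) (by omega) huv

/-! ### One merging round -/

/-- The `j`-th block of `m` consecutive arrival times after time `T`. -/
def block (n T m j : ℕ) : Finset (Fin n) :=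
  univ.filter fun v => T ≤ (v : ℕ) ∧ ((v : ℕ) - T) / m = j

theorem mem_block {n T m j : ℕ} {v : Fin n} :
    v ∈ block n T m j ↔ T ≤ (v : ℕ) ∧ ((v : ℕ) - T) / m = j := by
  simp [block]

theorem block_lt {n T m j N : ℕ} (hm : 0 < m) (hj : j < N) {v : Fin n}
    (hv : v ∈ block n T m j) : (v : ℕ) < T + m * N := by
  obtain ⟨h1, h2⟩ := mem_block.1 hv
  have h3 : (v : ℕ) - T < m * N := by
    rw [mul_comm]
    exact (Nat.div_lt_iff_lt_mul hm).1 (by omega)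
  omega

theorem card_block {n T m j N : ℕ} (hm : 0 < m) (hj : j < N) (hn : T + m * N ≤ n) :
    (block n T m j).card = m := by
  have h : (block n T m j).map Fin.valEmbedding = Ico (T + j * m) (T + j * m + m) := by
    have hle : (j + 1) * m ≤ m * N := by
      rw [mul_comm m]
      exact Nat.mul_le_mul_right m hj
    rw [add_mul, one_mul] at hle
    ext x
    simp only [mem_map, mem_block, Fin.valEmbedding_apply, mem_Ico]
    constructor
    · rintro ⟨v, ⟨h1, h2⟩, rfl⟩
      rw [Nat.div_eq_iff hm] at h2
      omega
    · rintro ⟨h1, h2⟩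
      refine ⟨⟨x, by omega⟩, ⟨by simp; omega, ?_⟩, rfl⟩
      rw [Nat.div_eq_iff hm]
      simp only
      omega
  rw [← card_map Fin.valEmbedding, h]
  simp

/-- The graph obtained from `G` when, for every `j < N`, the `j`-th block arrives as a clique
completely joined to `W (N + j)`. -/
def extend {n : ℕ} (T m N : ℕ) (G : SimpleGraph (Fin n)) (W : ℕ → Finset (Fin n)) :
    SimpleGraph (Fin n) where
  Adj u v := G.Adj u v ∨ (u ≠ v ∧ ∃ j < N, (u ∈ block n T m j ∨ v ∈ block n T m j) ∧
    (u ∈ block n T m j ∨ u ∈ W (N + j)) ∧ (v ∈ block n T m j ∨ v ∈ W (N + j)))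
  symm := ⟨by
    rintro u v (h | ⟨h, j, hj, h1, h2, h3⟩)
    · exact Or.inl h.symm
    · exact Or.inr ⟨h.symm, j, hj, h1.symm, h3, h2⟩⟩
  loopless := ⟨by
    rintro u (h | ⟨h, -⟩)
    · exact h.ne rfl
    · exact h rfl⟩

/-- The invariant of the construction. All edges of `G` lie before time `T`, and `W 0, …,
W (N - 1)` are the active sets. An active vertex has seen all its lookahead before time `T`, its
later neighbours are active in the same set, and there are fewer than `m` of them, so that it can
still be joined to one clique of `m` later vertices. -/
structure Ready {n : ℕ} (l m d N T : ℕ) (G : SimpleGraph (Fin n)) (W : ℕ → Finset (Fin n)) :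
    Prop where
  edge : ∀ u v, G.Adj u v → (u : ℕ) < T
  elim : IsElimOrder G
  deg : ∀ a, (laterNbrs G a).card < d
  time : ∀ i < N, ∀ v ∈ W i, (v : ℕ) + l < T
  disj : ∀ i < N, ∀ j < N, ∀ v, v ∈ W i → v ∈ W j → i = j
  up : ∀ i < N, ∀ a ∈ W i, ∀ b, a < b → G.Adj a b → b ∈ W i
  degW : ∀ i < N, ∀ a ∈ W i, (laterNbrs G a).card < m

section
variable {n l m d N T : ℕ} {G : SimpleGraph (Fin n)} {W : ℕ → Finset (Fin n)}

/-- The round in which no clique is attached: active sets are merged in pairs. -/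
theorem Ready.merge (h : Ready l m d (N + N) T G W) :
    Ready l m d N T G (fun j => W j ∪ W (N + j)) where
  edge := h.edge
  elim := h.elim
  deg := h.deg
  time i hi v hv := by
    rcases mem_union.1 hv with hv | hv
    · exact h.time _ (by omega) v hv
    · exact h.time _ (by omega) v hv
  disj i hi j hj v hv hw := by
    rcases mem_union.1 hv with hv | hv <;> rcases mem_union.1 hw with hw | hw <;>
      have := h.disj _ (by omega) _ (by omega) v hv hw <;> omega
  up i hi a ha b hab hadj := by
    rcases mem_union.1 ha with ha | ha
    · exact mem_union_left _ (h.up _ (by omega) a ha b hab hadj)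
    · exact mem_union_right _ (h.up _ (by omega) a ha b hab hadj)
  degW i hi a ha := by
    rcases mem_union.1 ha with ha | ha
    · exact h.degW _ (by omega) a ha
    · exact h.degW _ (by omega) a ha

theorem Ready.adj_extend (h : Ready l m d (N + N) T G W) {a b : Fin n} (hab : a < b) :
    (extend T m N G W).Adj a b ↔
      G.Adj a b ∨ ∃ j < N, b ∈ block n T m j ∧ (a ∈ block n T m j ∨ a ∈ W (N + j)) := by
  constructor
  · rintro (h1 | ⟨-, j, hj, h1, h2, h3⟩)
    · exact Or.inl h1
    · refine Or.inr ⟨j, hj, ?_, h2⟩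
      rcases h3 with h3 | h3
      · exact h3
      · rcases h1 with h1 | h1
        · have h4 := h.time _ (by omega) b h3
          have h5 := (mem_block.1 h1).1
          have : (a : ℕ) < b := hab
          omega
        · exact h1
  · rintro (h1 | ⟨j, hj, h1, h2⟩)
    · exact Or.inl h1
    · exact Or.inr ⟨hab.ne, j, hj, Or.inr h1, h2, Or.inl h1⟩

theorem adj_extend_iff_of_lt {u v : Fin n} (hu : (u : ℕ) < T) (hv : (v : ℕ) < T) :
    (extend T m N G W).Adj u v ↔ G.Adj u v := by
  refine ⟨?_, Or.inl⟩
  rintro (h | ⟨-, j, -, h | h, -⟩)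
  · exact h
  · have := (mem_block.1 h).1
    omega
  · have := (mem_block.1 h).1
    omega

/-- The round in which cliques are attached. The set `W (N + j)` is consumed: it lies behind the
clique `block n T m j`, which becomes active together with `W j`. -/
theorem Ready.attach (h : Ready l m d (N + N) T G W) (hm : 0 < m) (hmd : 2 * m ≤ d)
    (hn : T + m * N ≤ n) :
    Ready l m d N (T + m * N + l) (extend T m N G W) (fun j => W j ∪ block n T m j) := by
  have hold : ∀ i < N + N, ∀ a ∈ W i, (a : ℕ) < T := fun i hi a ha => by
    have := h.time i hi a ha
    omega
  have hbl : ∀ {j : ℕ} {a : Fin n}, a ∈ block n T m j → T ≤ (a : ℕ) := fun ha =>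
    (mem_block.1 ha).1
  have hbb : ∀ {i j : ℕ} {a : Fin n}, a ∈ block n T m i → a ∈ block n T m j → i = j :=
    fun hi hj => (mem_block.1 hi).2.symm.trans (mem_block.1 hj).2
  have keep : ∀ i < N, ∀ a ∈ W i, laterNbrs (extend T m N G W) a = laterNbrs G a := by
    intro i hi a ha
    ext b
    simp only [mem_laterNbrs]
    refine and_congr_right fun hab => ?_
    rw [h.adj_extend hab]
    refine ⟨?_, Or.inl⟩
    rintro (h1 | ⟨j, hj, -, h2 | h2⟩)
    · exact h1
    · have := hold i (by omega) a ha
      have := hbl h2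
      omega
    · have := h.disj _ (by omega) _ (by omega) a ha h2
      omega
  have fresh : ∀ j < N, ∀ a ∈ block n T m j,
      laterNbrs (extend T m N G W) a ⊆ (block n T m j).erase a := by
    intro j hj a ha b hb
    obtain ⟨hab, hb⟩ := mem_laterNbrs.1 hb
    refine mem_erase.2 ⟨hab.ne', ?_⟩
    rcases (h.adj_extend hab).1 hb with h1 | ⟨i, hi, h1, h2 | h2⟩
    · have := h.edge _ _ h1
      have := hbl ha
      omega
    · rwa [hbb ha h2]
    · have := hold _ (by omega) a h2
      have := hbl ha
      omega
  have freshcard : ∀ j < N, ∀ a ∈ block n T m j,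
      (laterNbrs (extend T m N G W) a).card < m := by
    intro j hj a ha
    have h1 := card_le_card (fresh j hj a ha)
    rw [card_erase_of_mem ha, card_block hm hj hn] at h1
    omega
  refine ⟨?_, ?_, ?_, ?_, ?_, ?_, ?_⟩
  · rintro u v (h1 | ⟨-, j, hj, -, h1 | h1, -⟩)
    · have := h.edge _ _ h1
      omega
    · have := block_lt hm hj h1
      omega
    · have := hold _ (by omega) u h1
      omega
  · intro a b c hab hac hbc h1 h2
    rcases (h.adj_extend hab).1 h1 with h1 | ⟨i, hi, hb, h1⟩ <;>
      rcases (h.adj_extend hac).1 h2 with h2 | ⟨j, hj, hc, h2⟩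
    · exact Or.inl (h.elim a b c hab hac hbc h1 h2)
    · rcases h2 with h2 | h2
      · have := h.edge _ _ h1
        have := hbl h2
        omega
      · exact Or.inr ⟨hbc, j, hj, Or.inr hc, Or.inr (h.up _ (by omega) a h2 b hab h1),
          Or.inl hc⟩
    · rcases h1 with h1 | h1
      · have := h.edge _ _ h2
        have := hbl h1
        omega
      · exact Or.inr ⟨hbc, i, hi, Or.inl hb, Or.inl hb,
          Or.inr (h.up _ (by omega) a h1 c hac h2)⟩
    · have hij : i = j := by
        rcases h1 with h1 | h1 <;> rcases h2 with h2 | h2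
        · exact hbb h1 h2
        · have := hold _ (by omega) a h2
          have := hbl h1
          omega
        · have := hold _ (by omega) a h1
          have := hbl h2
          omega
        · have := h.disj _ (by omega) _ (by omega) a h1 h2
          omega
      subst hij
      exact Or.inr ⟨hbc, i, hi, Or.inl hb, Or.inl hb, Or.inl hc⟩
  · intro a
    by_cases h1 : ∃ j < N, a ∈ block n T m j
    · obtain ⟨j, hj, ha⟩ := h1
      have := freshcard j hj a ha
      omega
    by_cases h2 : ∃ j < N, a ∈ W (N + j)
    · obtain ⟨j, hj, ha⟩ := h2
      have hsub : laterNbrs (extend T m N G W) a ⊆ laterNbrs G a ∪ block n T m j := by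
        intro b hb
        obtain ⟨hab, hb⟩ := mem_laterNbrs.1 hb
        rcases (h.adj_extend hab).1 hb with h3 | ⟨i, hi, hb, h4 | h4⟩
        · exact mem_union_left _ (mem_laterNbrs.2 ⟨hab, h3⟩)
        · exact absurd ⟨i, hi, h4⟩ h1
        · have := h.disj _ (by omega) _ (by omega) a ha h4
          obtain rfl : i = j := by omega
          exact mem_union_right _ hb
      have h3 := (card_le_card hsub).trans (card_union_le _ _)
      have h4 := h.degW _ (by omega) a ha
      rw [card_block hm hj hn] at h3
      omega
    · refine lt_of_le_of_lt (card_le_card fun b hb => ?_) (h.deg a)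
      obtain ⟨hab, hb⟩ := mem_laterNbrs.1 hb
      rcases (h.adj_extend hab).1 hb with h3 | ⟨i, hi, hb, h4 | h4⟩
      · exact mem_laterNbrs.2 ⟨hab, h3⟩
      · exact absurd ⟨i, hi, h4⟩ h1
      · exact absurd ⟨i, hi, h4⟩ h2
  · intro i hi v hv
    rcases mem_union.1 hv with hv | hv
    · have := h.time _ (by omega) v hv
      omega
    · have := block_lt hm hi hv
      omega
  · intro i hi j hj v hv hw
    rcases mem_union.1 hv with hv | hv <;> rcases mem_union.1 hw with hw | hw
    · exact h.disj _ (by omega) _ (by omega) v hv hw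
    · have := hold _ (by omega) v hv
      have := hbl hw
      omega
    · have := hold _ (by omega) v hw
      have := hbl hv
      omega
    · exact hbb hv hw
  · intro i hi a ha b hab hadj
    have hb : b ∈ laterNbrs (extend T m N G W) a := mem_laterNbrs.2 ⟨hab, hadj⟩
    rcases mem_union.1 ha with ha | ha
    · rw [keep i hi a ha] at hb
      exact mem_union_left _ (h.up _ (by omega) a ha b hab (mem_laterNbrs.1 hb).2)
    · exact mem_union_right _ (mem_of_mem_erase (fresh i hi a ha hb))
  · intro i hi a ha
    rcases mem_union.1 ha with ha | ha
    · rw [keep i hi a ha]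
      exact h.degW _ (by omega) a ha
    · exact freshcard i hi a ha

end

/-! ### Counting colors -/

theorem card_union_add_card_union {X Y Z : Finset ℕ} (h : Disjoint Y Z) :
    X.card + Y.card + Z.card ≤ (X ∪ Z).card + (X ∪ Y).card := by
  have h1 := card_union_add_card_inter (X ∪ Z) (X ∪ Y)
  have h2 : (Y ∪ Z).card ≤ (X ∪ Z ∪ (X ∪ Y)).card :=
    card_le_card (by intro x; simp only [mem_union]; tauto)
  have h3 : X.card ≤ ((X ∪ Z) ∩ (X ∪ Y)).card :=
    card_le_card (by intro x; simp only [mem_union, mem_inter]; tauto)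
  rw [card_union_of_disjoint h] at h2
  omega

/-- The average, over the outcomes of the merging rounds, of the number of colors of the active
sets grows by at least `m / 2` per round. If `Z` are the colors of the clique attached to
`W (N + j)`, and `X`, `Y` those of `W j`, `W (N + j)`, then `Z` misses `Y`, so
`|X ∪ Z| + |X ∪ Y| ≥ |X| + |Y| + m`; the left side sums the two outcomes of the round. The
multiset of graphs is chosen before the algorithm `A`. -/
theorem exists_hard_graphs {n l m d : ℕ} (hm : 0 < m) (hmd : 2 * m ≤ d) (k : ℕ) :
    ∀ (T : ℕ) (G : SimpleGraph (Fin n)) (W : ℕ → Finset (Fin n)),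
      Ready l m d (2 ^ k) T G W → T + m * 2 ^ k + k * l ≤ n →
      ∃ M : Multiset (SimpleGraph (Fin n)), M.card = 2 ^ k ∧
        (∀ H ∈ M, IsElimOrder H ∧ (∀ a, (laterNbrs H a).card < d) ∧
          ∀ u v : Fin n, (u : ℕ) < T → (v : ℕ) < T → (H.Adj u v ↔ G.Adj u v)) ∧
        ∀ A : Fin n → SimpleGraph (Fin n) → ℕ, IsOnlineAlgLookahead l A →
          2 * (∑ j ∈ range (2 ^ k), ((W j).image fun v => A v G).card) + k * m * 2 ^ k ≤
            2 * (M.map fun H => colorsUsed A H).sum := by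
  induction k with
  | zero =>
    intro T G W hW _
    refine ⟨{G}, by simp, ?_, fun A _ => ?_⟩
    · intro H hH
      rw [Multiset.mem_singleton] at hH
      subst hH
      exact ⟨hW.elim, hW.deg, fun _ _ _ _ => Iff.rfl⟩
    · simp only [pow_zero, range_one, sum_singleton, Multiset.map_singleton,
        Multiset.sum_singleton, zero_mul, add_zero]
      exact Nat.mul_le_mul_left 2 (card_le_card (image_subset_image (subset_univ _)))
  | succ k ih =>
    intro T G W hW hT
    have h2 : 2 ^ (k + 1) = 2 ^ k + 2 ^ k := by ring
    rw [h2] at hW hT ⊢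
    rw [mul_add, add_mul k 1 l, one_mul] at hT
    have hW' := hW.attach hm hmd (by omega)
    obtain ⟨M₁, hc₁, hM₁, hA₁⟩ := ih _ _ _ hW.merge (by omega)
    obtain ⟨M₂, hc₂, hM₂, hA₂⟩ := ih _ _ _ hW' (by omega)
    refine ⟨M₁ + M₂, by rw [Multiset.card_add, hc₁, hc₂], ?_, fun A hA => ?_⟩
    · intro H hH
      rcases Multiset.mem_add.1 hH with hH | hH
      · exact hM₁ H hH
      · obtain ⟨h3, h4, h5⟩ := hM₂ H hH
        exact ⟨h3, h4, fun u v hu hv =>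
          (h5 u v (by omega) (by omega)).trans (adj_extend_iff_of_lt hu hv)⟩
    · have e₁ := hA₁ A hA
      have e₂ := hA₂ A hA
      have key : ∀ j ∈ range (2 ^ k),
          ((W j).image fun v => A v G).card + ((W (2 ^ k + j)).image fun v => A v G).card + m ≤
          ((W j ∪ block n T m j).image fun v => A v (extend T m (2 ^ k) G W)).card +
            ((W j ∪ W (2 ^ k + j)).image fun v => A v G).card := by
        intro j hj
        rw [mem_range] at hj
        have same : ∀ i < 2 ^ k + 2 ^ k, ∀ v ∈ W i,
            A v (extend T m (2 ^ k) G W) = A v G := fun i hi v hv => by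
          have := hW.time i hi v hv
          exact hA.1 v _ _ fun x y hx hy => adj_extend_iff_of_lt (by omega) (by omega)
        have hZ : ((block n T m j).image fun v => A v (extend T m (2 ^ k) G W)).card = m := by
          rw [card_image_of_injOn, card_block hm hj (by omega)]
          intro x hx y hy hxy
          by_contra hne
          exact hA.2 _ x y (Or.inr ⟨hne, j, hj, Or.inl hx, Or.inl hx, Or.inl hy⟩) hxy
        have hdisj : Disjoint ((W (2 ^ k + j)).image fun v => A v G)
            ((block n T m j).image fun v => A v (extend T m (2 ^ k) G W)) := by
          rw [disjoint_left]
          intro x hx hx'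
          obtain ⟨v, hv, rfl⟩ := mem_image.1 hx
          obtain ⟨w, hw, hwv⟩ := mem_image.1 hx'
          have h3 := hW.time _ (by omega) v hv
          have h4 := (mem_block.1 hw).1
          have hne : w ≠ v := by
            rintro rfl
            omega
          rw [← same _ (by omega) v hv] at hwv
          exact hA.2 _ w v (Or.inr ⟨hne, j, hj, Or.inl hw, Or.inl hw, Or.inr hv⟩) hwv
        rw [image_union, image_union, image_congr (fun v hv => same j (by omega) v hv)]
        have := card_union_add_card_union (X := (W j).image fun v => A v G) hdisj
        rwa [hZ] at this
      have hsum := sum_le_sum key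
      rw [sum_add_distrib, sum_add_distrib, sum_add_distrib, sum_const, card_range,
        smul_eq_mul] at hsum
      rw [sum_range_add, Multiset.map_add, Multiset.sum_add]
      have e3 : (k + 1) * m * (2 ^ k + 2 ^ k) = k * m * 2 ^ k + k * m * 2 ^ k +
          2 * (2 ^ k * m) := by ring
      omega

/-- The complete graph on the first `d` vertices. -/
def initialClique (n d : ℕ) : SimpleGraph (Fin n) where
  Adj u v := u ≠ v ∧ (u : ℕ) < d ∧ (v : ℕ) < d
  symm := ⟨fun _ _ h => ⟨h.1.symm, h.2.2, h.2.1⟩⟩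
  loopless := ⟨fun _ h => h.1 rfl⟩

theorem card_filter_val_lt {n d : ℕ} (h : d ≤ n) :
    (univ.filter fun v : Fin n => (v : ℕ) < d).card = d := by
  have : (univ.filter fun v : Fin n => (v : ℕ) < d).map Fin.valEmbedding = range d := by
    ext x
    simp only [mem_map, mem_filter, mem_univ, true_and, Fin.valEmbedding_apply, mem_range]
    exact ⟨fun ⟨v, hv, e⟩ => e ▸ hv, fun hx => ⟨⟨x, by omega⟩, hx, rfl⟩⟩
  rw [← card_map Fin.valEmbedding, this, card_range]

theorem ready_initialClique {n l m d N : ℕ} (hd : 0 < d) (hdn : d ≤ n) :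
    Ready l m d N d (initialClique n d) (fun _ => ∅) where
  edge _ _ h := h.2.1
  elim _ _ _ _ _ hbc h1 h2 := ⟨hbc, h1.2.2, h2.2.2⟩
  deg a := by
    by_cases ha : (a : ℕ) < d
    · have hsub : laterNbrs (initialClique n d) a ⊆
          (univ.filter fun v : Fin n => (v : ℕ) < d).erase a := fun b hb => by
        obtain ⟨hab, -, -, hb⟩ := mem_laterNbrs.1 hb
        exact mem_erase.2 ⟨hab.ne', by simpa using hb⟩
      have h1 := card_le_card hsub
      rw [card_erase_of_mem (by simpa using ha), card_filter_val_lt hdn] at h1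
      omega
    · have : laterNbrs (initialClique n d) a = ∅ := by
        rw [eq_empty_iff_forall_notMem]
        intro b hb
        exact ha (mem_laterNbrs.1 hb).2.2.1
      rw [this]
      simpa using hd
  time _ _ _ hv := absurd hv (notMem_empty _)
  disj _ _ _ _ _ hv := absurd hv (notMem_empty _)
  up _ _ _ ha := absurd ha (notMem_empty _)
  degW _ _ _ ha := absurd ha (notMem_empty _)

/-- The active sets may start empty, since attaching cliques to empty sets creates the first
nonempty ones. -/
theorem exists_hard_chordal {n l m d k : ℕ} (hm : 0 < m) (hmd : 2 * m ≤ d)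
    (hn : d + m * 2 ^ k + k * l ≤ n) :
    ∃ M : Multiset (SimpleGraph (Fin n)), M.card = 2 ^ k ∧
      (∀ H ∈ M, H.IsChordal ∧ H.chromaticNumber = d) ∧
      ∀ A : Fin n → SimpleGraph (Fin n) → ℕ, IsOnlineAlgLookahead l A →
        k * m * 2 ^ k ≤ 2 * (M.map fun H => colorsUsed A H).sum := by
  have hdn : d ≤ n := by omega
  obtain ⟨M, hc, hM, hA⟩ := exists_hard_graphs hm hmd k d _ _
    (ready_initialClique (l := l) (by omega) hdn) hn
  refine ⟨M, hc, fun H hH => ?_, fun A h => ?_⟩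
  · obtain ⟨h1, h2, h3⟩ := hM H hH
    refine ⟨h1.isChordal, le_antisymm ?_ ?_⟩
    · exact (colorable_of_laterNbrs h2).chromaticNumber_le
    · have hcl : H.IsClique (univ.filter fun v : Fin n => (v : ℕ) < d) := by
        intro u hu v hv huv
        simp only [coe_filter, mem_univ, true_and, Set.mem_ofPred_eq] at hu hv
        exact (h3 u v hu hv).2 ⟨huv, hu, hv⟩
      have := hcl.card_le_chromaticNumber
      rwa [card_filter_val_lt hdn] at this
  · have := hA A h
    simpa using this

/-! ### Randomization and the choice of parameters -/

theorem colorsUsed_le {n : ℕ} (A : Fin n → SimpleGraph (Fin n) → ℕ) (G : SimpleGraph (Fin n)) :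
    colorsUsed A G ≤ n := by
  exact card_image_le.trans_eq (by simp)

theorem hasSum_toReal {ι : Type} (μ : PMF ι) : HasSum (fun i => (μ i).toReal) 1 := by
  have h := ENNReal.hasSum_toReal (f := fun i => μ i) μ.tsum_coe_ne_top
  rwa [← ENNReal.tsum_toReal_eq (fun i => μ.apply_ne_top i), μ.tsum_coe,
    ENNReal.toReal_one] at h

/-- Yao's principle: a bound on the average number of colors over a finite family of graphs, valid
for each deterministic algorithm, gives one graph on which the randomized algorithm is bad. -/
theorem exists_graph_expected {n : ℕ} {ι : Type} (μ : PMF ι)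
    (A : ι → Fin n → SimpleGraph (Fin n) → ℕ) (M : Multiset (SimpleGraph (Fin n))) (hM : M ≠ ∅)
    (B : ℝ) (hB : ∀ i, M.card * B ≤ ((M.map fun H => colorsUsed (A i) H).sum : ℕ)) :
    ∃ G ∈ M, B ≤ ∑' i, (μ i).toReal * (colorsUsed (A i) G : ℝ) := by
  by_contra! hlt
  have hsummable : ∀ G, Summable fun i => (μ i).toReal * (colorsUsed (A i) G : ℝ) := fun G =>
    Summable.of_nonneg_of_le (fun i => by positivity)
      (fun i => mul_le_mul_of_nonneg_left (Nat.cast_le.2 (colorsUsed_le (A i) G))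
        ENNReal.toReal_nonneg) ((hasSum_toReal μ).summable.mul_right (n : ℝ))
  have hswap : HasSum (fun i => (μ i).toReal * ((M.map fun H => colorsUsed (A i) H).sum : ℕ))
      (M.map fun G => ∑' i, (μ i).toReal * (colorsUsed (A i) G : ℝ)).sum := by
    clear hM hB hlt
    induction M using Multiset.induction_on with
    | empty => simp
    | cons G M ih =>
      simp only [Multiset.map_cons, Multiset.sum_cons, Nat.cast_add, mul_add]
      exact (hsummable G).hasSum.add ih
  have hle := hasSum_le (fun i => mul_le_mul_of_nonneg_left (hB i) ENNReal.toReal_nonneg)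
    ((hasSum_toReal μ).mul_right (M.card * B)) hswap
  have hlt' := Multiset.sum_lt_sum_of_nonempty hM hlt
  rw [Multiset.map_const', Multiset.sum_replicate, nsmul_eq_mul] at hlt'
  linarith

/-- With `k = ⌊log (n / d) / (2 c)⌋` rounds and cliques of size `m = ⌊d / 2⌋` the construction fits
into `n` vertices: the `k l` waiting steps take at most `n / 2`, the `m 2 ^ k` vertices of the
cliques at most `√(n d) / 2`, and `n / d ≥ 144`. -/
theorem exists_parameters {d n l : ℕ} {c : ℝ} (hd : 2 ≤ d) (hc : 1 ≤ c)
    (hn : max (12 * (d : ℝ) ^ 2) ((d : ℝ) * (12 : ℝ) ^ (2 * c)) ≤ (n : ℝ))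
    (hl : (l : ℝ) ≤ c * n / Real.logb 2 ((n : ℝ) / d)) :
    ∃ k : ℕ, d + d / 2 * 2 ^ k + k * l ≤ n ∧
      (1 / 48) / c * d * Real.logb 2 n ≤ (k * (d / 2 : ℕ) : ℕ) / 2 := by
  have hd0 : (2 : ℝ) ≤ d := by exact_mod_cast hd
  have hn1 : 12 * (d : ℝ) ^ 2 ≤ n := (le_max_left _ _).trans hn
  have hn2 : (d : ℝ) * (12 : ℝ) ^ (2 * c) ≤ n := (le_max_right _ _).trans hn
  have hnpos : (0 : ℝ) < n := by nlinarith
  set q : ℝ := (n : ℝ) / d with hq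
  have hqn : q * d = n := by
    rw [hq]
    field_simp
  have hqc : (12 : ℝ) ^ (2 * c) ≤ q := by
    rw [hq, le_div_iff₀ (by linarith)]
    linarith
  have hqpos : 0 < q := by positivity
  have hq144 : 144 ≤ q := by
    refine le_trans ?_ hqc
    calc (144 : ℝ) = (12 : ℝ) ^ (2 : ℝ) := by norm_num
      _ ≤ _ := Real.rpow_le_rpow_of_exponent_le (by norm_num) (by linarith)
  set L := Real.logb 2 q with hL
  have hL12 : 2 * c * 3 ≤ L := by
    rw [hL, Real.le_logb_iff_rpow_le (by norm_num) hqpos]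
    refine le_trans ?_ hqc
    rw [mul_comm (2 * c) 3, Real.rpow_mul (by norm_num)]
    exact Real.rpow_le_rpow (by positivity) (by norm_num) (by linarith)
  have hLpos : 0 < L := by linarith
  set x := L / (2 * c) with hx
  have hxL : x * (2 * c) = L := by
    rw [hx]
    field_simp
  have hx3 : 3 ≤ x := by
    rw [hx, le_div_iff₀ (by linarith)]
    linarith
  have hk1 : (⌊x⌋₊ : ℝ) ≤ x := Nat.floor_le (by linarith)
  have hk2 : x < ⌊x⌋₊ + 1 := Nat.lt_floor_add_one x
  have hm1 : ((d / 2 : ℕ) : ℝ) ≤ d / 2 := by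
    have : 2 * (d / 2) ≤ d := Nat.mul_div_le d 2
    have : (2 : ℝ) * (d / 2 : ℕ) ≤ d := by exact_mod_cast this
    linarith
  have hm2 : (d : ℝ) / 3 ≤ ((d / 2 : ℕ) : ℝ) := by
    have : d ≤ 3 * (d / 2) := by omega
    have : (d : ℝ) ≤ 3 * (d / 2 : ℕ) := by exact_mod_cast this
    linarith
  refine ⟨⌊x⌋₊, ?_, ?_⟩
  · have hkl : (⌊x⌋₊ : ℝ) * l ≤ n / 2 := by
      calc (⌊x⌋₊ : ℝ) * l ≤ x * (c * n / L) :=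
            mul_le_mul hk1 hl (by positivity) (by linarith)
        _ = n / 2 := by
            rw [hx]
            field_simp
    have hpow : ((2 : ℝ) ^ ⌊x⌋₊) ^ 2 ≤ q := by
      have h1 : Real.logb 2 q = L := rfl
      calc ((2 : ℝ) ^ ⌊x⌋₊) ^ 2 = (2 : ℝ) ^ ((⌊x⌋₊ : ℝ) * 2) := by
            rw [Real.rpow_mul (by norm_num), Real.rpow_natCast]
            norm_num
        _ ≤ (2 : ℝ) ^ L := Real.rpow_le_rpow_of_exponent_le (by norm_num) (by nlinarith)
        _ = q := Real.rpow_logb (by norm_num) (by norm_num) hqpos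
    have hpow' : (2 : ℝ) ^ ⌊x⌋₊ ≤ q / 12 := by
      rw [← pow_le_pow_iff_left₀ (by positivity) (by positivity) two_ne_zero]
      refine hpow.trans ?_
      nlinarith
    have h1 : ((d / 2 : ℕ) : ℝ) * 2 ^ ⌊x⌋₊ ≤ d / 2 * (q / 12) :=
      mul_le_mul hm1 hpow' (by positivity) (by linarith)
    have h2 : (d : ℝ) + (d / 2 : ℕ) * 2 ^ ⌊x⌋₊ + ⌊x⌋₊ * l ≤ n := by nlinarith
    exact_mod_cast h2
  · have hlog : Real.logb 2 n ≤ 2 * L := by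
      have : (n : ℝ) ≤ q ^ 2 := by nlinarith
      calc Real.logb 2 n ≤ Real.logb 2 (q ^ 2) :=
            Real.logb_le_logb_of_le (by norm_num) hnpos this
        _ = 2 * L := by
            rw [Real.logb_pow, hL]
            norm_num
    have hk3 : x / 2 ≤ (⌊x⌋₊ : ℝ) := by linarith
    have hcpos : 0 < c := by linarith
    calc (1 / 48) / c * d * Real.logb 2 n ≤ (1 / 48) / c * d * (2 * L) :=
          mul_le_mul_of_nonneg_left hlog (by positivity)
      _ = x / 2 * (d / 3) / 2 := by
          rw [hx]
          field_simp
          norm_num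
      _ ≤ (⌊x⌋₊ * (d / 2 : ℕ) : ℕ) / 2 := by
          push_cast
          have := mul_le_mul hk3 hm2 (by positivity) (by positivity)
          linarith

theorem rand_lookahead_lower_bound_chordal :
    ∃ α : ℝ, 0 < α ∧
      ∀ (d : ℕ), 2 ≤ d →
        ∀ (c : ℝ), 1 ≤ c →
          ∀ (n : ℕ), max (12 * (d : ℝ) ^ 2) ((d : ℝ) * (12 : ℝ) ^ (2 * c)) ≤ (n : ℝ) →
            ∀ (l : ℕ), (l : ℝ) ≤ c * n / Real.logb 2 ((n : ℝ) / d) →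
              ∀ (ι : Type) [Countable ι] (μ : PMF ι)
                (A : ι → Fin n → SimpleGraph (Fin n) → ℕ),
                (∀ i, IsOnlineAlgLookahead l (A i)) →
                ∃ G : SimpleGraph (Fin n), G.IsChordal ∧ G.chromaticNumber = d ∧
                  (α / c) * d * Real.logb 2 n ≤
                    ∑' i, (μ i).toReal * (colorsUsed (A i) G : ℝ) := by
  refine ⟨1 / 48, by norm_num, fun d hd c hc n hn l hl ι _ μ A hA => ?_⟩
  obtain ⟨k, hfit, hk⟩ := exists_parameters hd hc hn hl
  obtain ⟨M, hcard, hM, hcol⟩ :=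
    exists_hard_chordal (l := l) (m := d / 2) (d := d) (by omega) (by omega) hfit
  have hne : M ≠ ∅ := by
    rintro rfl
    have : 0 < 2 ^ k := by positivity
    simp at hcard
    omega
  obtain ⟨G, hG, hB⟩ := exists_graph_expected μ A M hne (((k * (d / 2 : ℕ) : ℕ) : ℝ) / 2)
    fun i => by
      have h : ((k * (d / 2) * 2 ^ k : ℕ) : ℝ) ≤
          (2 * (M.map fun H => colorsUsed (A i) H).sum : ℕ) := by exact_mod_cast hcol _ (hA i)
      rw [hcard]
      rw [Nat.cast_mul, Nat.cast_mul 2] at h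
      push_cast at h ⊢
      linarith
  exact ⟨G, (hM G hG).1, (hM G hG).2, hk.trans hB⟩
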